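/- Assume q is not a root of unity (q½, t½ arbitrary nonzero complex numbers). Then Rad is an A-submodule of V, and if the quotient V' = V/Rad is finite-dimensional over ℂ, then V' is a simple A-module: the only subspaces of V' invariant under the operators induced by T, π and multiplication by X are {0} and V'. -/

import Mathlib

noncomputable section

/-- `V = ℂ[X, X⁻¹]`, the space of complex Laurent polynomials. -/
abbrev V : Type := LaurentPolynomial ℂ

/-- The monomial `X ^ m`. -/
def Xm (m : ℤ) : V := LaurentPolynomial.T m

/-- The radical of the duality pairing. -/
def Rad (pair : V →ₗ[ℂ] V →ₗ[ℂ] ℂ) : Submodule ℂ V := LinearMap.ker pair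

/-!
Write `D` for the Demazure–Lusztig operator, `c = t^½ - t^{-½}`, and `M` for a subspace stable
under `D`, `π` and `X`.

The relations `D X D = X⁻¹`, `D² = c D + 1` and `π X = q^½ X⁻¹ π` give, for the duality pairing, the
adjoints `D` of `D` and `X` of `Y⁻¹`; as `X` has adjoint `Y⁻¹` and `π = D Y⁻¹`, the radical is
stable.

Since `X⁻¹ = D X D`, the subspace `M` is an ideal, so unless `M = 0` or `M = V` its zero locus `Z`
over an algebraic closure is finite and nonempty. Evaluating the formula for `(X² - 1) D f` at
`v ∈ Z` gives `(t^½ v² - t^{-½}) f(v⁻¹) = 0`, hence `v⁻¹ ∈ Z` unless `v = ±t^{-½}`, while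
`π` maps `Z` to itself by `v ↦ q^½ v⁻¹`. If `Z` avoids `±t^{-½}`, it is therefore stable under
`v ↦ q^½ v`, which is impossible when `q` is not a root of unity. If `t^{-½} ∈ Z`, then `ev`
vanishes on the `Y`-stable space `M`, so `M ⊆ Rad` by adjointness. If `-t^{-½} ∈ Z`, the same holds
for the twist of `M` by `X ↦ -X`; when moreover `Rad ⊆ M`, untwisting gives `M ⊆ Rad` again.
-/

section LaurentPolynomials

open LaurentPolynomial

section Semiring

variable {R A : Type*} [CommSemiring R] [Semiring A] [Algebra R A]

/-- The substitution `X ↦ u`. The target may be noncommutative, so that both the evaluation at a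
point and `f ↦ f(Y⁻¹)` are instances. -/
def laurentAeval (u : Aˣ) : R[T;T⁻¹] →ₐ[R] A :=
  AddMonoidAlgebra.lift R A ℤ ((Units.coeHom A).comp (zpowersHom Aˣ u))

@[simp]
theorem laurentAeval_T (u : Aˣ) (m : ℤ) : laurentAeval u (T m : R[T;T⁻¹]) = ↑(u ^ m) := by
  simp [laurentAeval, T, -single_eq_C_mul_T]

theorem laurentLinearMap_ext {M : Type*} [AddCommMonoid M] [Module R M]
    {φ ψ : R[T;T⁻¹] →ₗ[R] M} (h : ∀ m, φ (T m) = ψ (T m)) : φ = ψ :=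
  AddMonoidAlgebra.lhom_ext' fun m => LinearMap.ext_ring (h m)

theorem laurentAlgHom_ext {φ ψ : R[T;T⁻¹] →ₐ[R] A} (h : φ (T 1) = ψ (T 1)) : φ = ψ := by
  have h_monoidHom : (φ : R[T;T⁻¹] →* A).comp (AddMonoidAlgebra.of R ℤ) =
      (ψ : R[T;T⁻¹] →* A).comp (AddMonoidAlgebra.of R ℤ) := MonoidHom.ext_mint h
  exact AlgHom.toLinearMap_injective
    (laurentLinearMap_ext fun m => DFunLike.congr_fun h_monoidHom (.ofAdd m))

theorem laurentLinearMap_ext_of_T_one_mul {M : Type*} [AddCommMonoid M] [Module R M]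
    {φ ψ : R[T;T⁻¹] →ₗ[R] M} (h_one : φ 1 = ψ 1)
    (h_mul : ∀ f, φ (T 1 * f) = ψ (T 1 * f) ↔ φ f = ψ f) : φ = ψ := by
  refine laurentLinearMap_ext fun m => ?_
  induction m using Int.induction_on with
  | zero => exact h_one
  | succ n ih => rwa [add_comm, T_add, h_mul]
  | pred n ih => rwa [← h_mul, ← T_add, add_sub_cancel]

theorem T_one_mul_T_neg_one_mul (f : R[T;T⁻¹]) : T 1 * (T (-1) * f) = f := by
  rw [← mul_assoc, ← T_add, add_neg_cancel, T_zero, one_mul]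

theorem val_unitOfInvertible_T_one_zpow (m : ℤ) :
    ((unitOfInvertible (T 1 : R[T;T⁻¹]) ^ m : R[T;T⁻¹]ˣ) : R[T;T⁻¹]) = T m := by
  have h : laurentAeval (unitOfInvertible (T 1)) = AlgHom.id R R[T;T⁻¹] :=
    laurentAlgHom_ext (by simp)
  simpa using DFunLike.congr_fun h (T m)

/-- The substitution `f(X) ↦ f(c X⁻¹)`; for `c = q^½` it is the operator `π`. -/
def scaledInvert (c : Rˣ) : R[T;T⁻¹] →ₐ[R] R[T;T⁻¹] :=
  laurentAeval (Units.map (algebraMap R R[T;T⁻¹] : R →* R[T;T⁻¹]) c * (unitOfInvertible (T 1))⁻¹)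

theorem scaledInvert_T (c : Rˣ) (m : ℤ) : scaledInvert c (T m) = (↑(c ^ m) : R) • T (-m) := by
  rw [scaledInvert, laurentAeval_T, mul_zpow, ← map_zpow, inv_zpow', Units.val_mul,
    val_unitOfInvertible_T_one_zpow, Units.coe_map, MonoidHom.coe_coe, Algebra.smul_def]

theorem laurentAeval_scaledInvert (u : Aˣ) (c : Rˣ) (f : R[T;T⁻¹]) :
    laurentAeval u (scaledInvert c f) = laurentAeval (c • u⁻¹) f := by
  refine DFunLike.congr_fun (laurentAlgHom_ext (φ := (laurentAeval u).comp (scaledInvert c)) ?_) f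
  simp [scaledInvert_T, Units.smul_def]

theorem scaledInvert_scaledInvert (c : Rˣ) (f : R[T;T⁻¹]) :
    scaledInvert c (scaledInvert c f) = f := by
  have h : (scaledInvert c).comp (scaledInvert c) = AlgHom.id R R[T;T⁻¹] :=
    laurentAlgHom_ext (by simp [scaledInvert_T, smul_smul])
  exact DFunLike.congr_fun h f

theorem laurentAeval_smul_one (c : Rˣ) (f : R[T;T⁻¹]) :
    laurentAeval (c • (1 : Aˣ)) f = algebraMap R A (laurentAeval c f) := by
  refine DFunLike.congr_fun (laurentAlgHom_ext
    (ψ := (Algebra.ofId R A).comp (laurentAeval c)) ?_) f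
  simp [Units.smul_def, Algebra.ofId_apply, Algebra.algebraMap_eq_smul_one]

theorem laurentAeval_invert (u : Aˣ) (f : R[T;T⁻¹]) :
    laurentAeval u (invert f) = laurentAeval u⁻¹ f :=
  DFunLike.congr_fun (laurentAlgHom_ext (φ := (laurentAeval u).comp invert.toAlgHom)
    (ψ := laurentAeval u⁻¹) (by simp)) f

end Semiring

section Ring

variable {R A : Type*} [CommRing R] [Ring A] [Algebra R A]

/-- The substitution `f(X) ↦ f(-X)`. -/
def negSubst : R[T;T⁻¹] →ₐ[R] R[T;T⁻¹] :=
  laurentAeval (R := R) (A := R[T;T⁻¹]) (-unitOfInvertible (T 1 : R[T;T⁻¹]))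

theorem negSubst_T_one : negSubst (T 1 : R[T;T⁻¹]) = -T 1 := by
  simp [negSubst]

theorem negSubst_T_neg_one : negSubst (T (-1) : R[T;T⁻¹]) = -T (-1) := by
  simp [negSubst]

theorem laurentAeval_negSubst (u : Aˣ) (f : R[T;T⁻¹]) :
    laurentAeval u (negSubst f) = laurentAeval (-u) f := by
  refine DFunLike.congr_fun (laurentAlgHom_ext (φ := (laurentAeval u).comp negSubst) ?_) f
  simp [negSubst_T_one]

theorem negSubst_negSubst (f : R[T;T⁻¹]) : negSubst (negSubst f) = f := by
  have h : negSubst.comp negSubst = AlgHom.id R R[T;T⁻¹] :=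
    laurentAlgHom_ext (by simp [negSubst_T_one])
  exact DFunLike.congr_fun h f

theorem negSubst_scaledInvert (c : Rˣ) (f : R[T;T⁻¹]) :
    negSubst (scaledInvert c f) = scaledInvert c (negSubst f) := by
  have h : negSubst.comp (scaledInvert c) = (scaledInvert c).comp negSubst :=
    laurentAlgHom_ext (by simp [negSubst_T_one, negSubst_T_neg_one, scaledInvert_T])
  exact DFunLike.congr_fun h f

end Ring

end LaurentPolynomials

section ZeroLocus
open LaurentPolynomial

variable {K : Type*} [Field K] (L : Type*) [Field L] [Algebra K L]

/-- The points of the torus `Lˣ` at which all Laurent polynomials in `s` vanish. -/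
def laurentZeroLocus (s : Set K[T;T⁻¹]) : Set Lˣ :=
  {u | ∀ f ∈ s, laurentAeval u f = 0}

variable {L} in
theorem laurentAeval_toLaurent (u : Lˣ) (p : Polynomial K) :
    laurentAeval u p.toLaurent = Polynomial.aeval (u : L) p := by
  refine DFunLike.congr_fun (Polynomial.algHom_ext
    (f := (laurentAeval u).comp Polynomial.toLaurentAlg) ?_) p
  simp

theorem finite_laurentZeroLocus {I : Ideal K[T;T⁻¹]} (hI : I ≠ ⊥) :
    (laurentZeroLocus L (I : Set K[T;T⁻¹])).Finite := by
  obtain ⟨f, hfI, hf⟩ := I.ne_bot_iff.mp hI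
  obtain ⟨n, p, hp⟩ := exists_T_pow f
  have hp_ne : p ≠ 0 := by
    rw [← Polynomial.toLaurent_ne_zero, hp]
    exact (isUnit_T (n : ℤ)).mul_left_eq_zero.not.mpr hf
  refine ((p.rootSet_finite L).preimage Units.val_injective.injOn).subset fun u hu => ?_
  rw [Set.mem_preimage, Polynomial.mem_rootSet_of_ne hp_ne, ← laurentAeval_toLaurent, hp, map_mul,
    hu f hfI, zero_mul]

theorem nonempty_laurentZeroLocus [IsAlgClosed L] {I : Ideal K[T;T⁻¹]} (hI : I ≠ ⊤) :
    (laurentZeroLocus L (I : Set K[T;T⁻¹])).Nonempty := by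
  obtain ⟨m, hm, hIm⟩ := I.exists_le_maximal hI
  let := Ideal.Quotient.field m
  have : Module.Finite K (K[T;T⁻¹] ⧸ m) := finite_of_finite_type_of_isJacobsonRing K _
  let φ : K[T;T⁻¹] →ₐ[K] L := IsAlgClosed.lift.comp (Ideal.Quotient.mkₐ K m)
  have hφ : laurentAeval (Units.map (φ : K[T;T⁻¹] →* L) (unitOfInvertible (T 1))) = φ :=
    laurentAlgHom_ext (by simp)
  refine ⟨_, fun f hf => (DFunLike.congr_fun hφ f).trans ?_⟩
  rw [AlgHom.comp_apply, Ideal.Quotient.mkₐ_eq_mk, Ideal.Quotient.eq_zero_iff_mem.mpr (hIm hf),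
    map_zero]

theorem exists_ideal_restrictScalars_eq {R : Type*} [CommSemiring R]
    {M : Submodule R R[T;T⁻¹]} (hX : ∀ f ∈ M, T 1 * f ∈ M)
    (hX_inv : ∀ f ∈ M, T (-1) * f ∈ M) :
    ∃ I : Ideal R[T;T⁻¹], I.restrictScalars R = M := by
  have h_smul (f : R[T;T⁻¹]) {g : R[T;T⁻¹]} (hg : g ∈ M) : f * g ∈ M := by
    induction f using LaurentPolynomial.induction_on with
    | h_C a => rw [← smul_eq_C_mul]; exact M.smul_mem a hg
    | h_add hp hq => rw [add_mul]; exact M.add_mem hp hq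
    | h_C_mul_T n a ih =>
      rw [add_comm, T_add, mul_left_comm, mul_assoc]; exact hX _ ih
    | h_C_mul_T_Z n a ih =>
      rw [T_sub, ← mul_assoc, mul_comm _ (T (-1)), mul_assoc]; exact hX_inv _ ih
  exact ⟨{ M with smul_mem' := fun f _ => h_smul f }, rfl⟩

end ZeroLocus

theorem isOfFinOrder_of_smul_mem {G α : Type*} [Group G] [MulAction G α] {s : Set α}
    (hs : s.Finite) {a : α} (ha : a ∈ s) (h_inj : Function.Injective fun g : G => g • a)
    {g : G} (hg : ∀ b ∈ s, g • b ∈ s) : IsOfFinOrder g := by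
  by_contra h
  have h_mem (n : ℕ) : g ^ n • a ∈ s := by
    induction n with
    | zero => simpa
    | succ n ih => rw [pow_succ', mul_smul]; exact hg _ ih
  exact Set.infinite_of_injective_forall_mem
    (h_inj.comp (injective_pow_iff_not_isOfFinOrder.mpr h)) h_mem hs

section DemazureLusztig

open LaurentPolynomial

variable {R : Type*} [CommRing R]

/-- `D` is the Demazure–Lusztig operator with parameter `t^½ = t`, i.e.
`D = t s + (t - t⁻¹) (X² - 1)⁻¹ (s - 1)` with the denominator cleared. -/
def IsDemazureLusztig (t : Rˣ) (D : Module.End R R[T;T⁻¹]) : Prop :=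
  ∀ f, (T 2 - 1) * D f =
    (t : R) • ((T 2 - 1) * invert f) + (t - ↑t⁻¹ : R) • (invert f - f)

theorem T_two_sub_one_ne_zero [Nontrivial R] : (T 2 - 1 : R[T;T⁻¹]) ≠ 0 := by
  rw [← T_zero, sub_ne_zero]
  intro h
  have h_degree := congrArg degree h
  rw [degree_T, degree_T] at h_degree
  exact absurd h_degree (by decide)

namespace IsDemazureLusztig

variable [IsDomain R] {t : Rˣ} {D : Module.End R R[T;T⁻¹]}

theorem apply_one (hD : IsDemazureLusztig t D) : D 1 = (t : R) • 1 := by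
  apply mul_left_cancel₀ T_two_sub_one_ne_zero
  rw [hD, map_one, sub_self, smul_zero, add_zero, mul_smul_comm]

theorem apply_T_one_mul (hD : IsDemazureLusztig t D) (f : R[T;T⁻¹]) :
    D (T 1 * f) = T (-1) * (D f - (t - ↑t⁻¹ : R) • f) := by
  have h_inv : (T 1 * T (-1) : R[T;T⁻¹]) = 1 := by rw [← T_add, add_neg_cancel, T_zero]
  have h_sq : (T 2 : R[T;T⁻¹]) = T 1 ^ 2 := by rw [T_pow]; norm_num
  have h_f := hD f
  have h_Xf := hD (T 1 * f)
  apply mul_left_cancel₀ T_two_sub_one_ne_zero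
  rw [map_mul invert, invert_T] at h_Xf
  simp only [h_sq, Algebra.smul_def] at h_f h_Xf ⊢
  linear_combination h_Xf - T (-1) * h_f
    + algebraMap R R[T;T⁻¹] (t - ↑t⁻¹) * f * T 1 * h_inv

theorem apply_T_neg_one_mul (hD : IsDemazureLusztig t D) (f : R[T;T⁻¹]) :
    D (T (-1) * f) = T 1 * D f + (t - ↑t⁻¹ : R) • (T (-1) * f) := by
  conv_rhs => rw [← T_one_mul_T_neg_one_mul f, hD.apply_T_one_mul, T_one_mul_T_neg_one_mul f,
    T_one_mul_T_neg_one_mul]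
  rw [sub_add_cancel]

theorem apply_apply (hD : IsDemazureLusztig t D) (f : R[T;T⁻¹]) :
    D (D f) = (t - ↑t⁻¹ : R) • D f + f := by
  suffices h : D * D = (t - ↑t⁻¹ : R) • D + 1 from LinearMap.congr_fun h f
  refine laurentLinearMap_ext_of_T_one_mul ?_ fun g => ?_
  · change D (D 1) = (t - ↑t⁻¹ : R) • D 1 + 1
    rw [hD.apply_one, map_smul, hD.apply_one, smul_smul, smul_smul, sub_mul, Units.inv_mul,
      sub_smul, one_smul, sub_add_cancel]
  · have h_mul : D (D (T 1 * g)) - ((t - ↑t⁻¹ : R) • D (T 1 * g) + T 1 * g) =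
        T 1 * (D (D g) - ((t - ↑t⁻¹ : R) • D g + g)) := by
      rw [hD.apply_T_one_mul, hD.apply_T_neg_one_mul, map_sub, map_smul]
      simp only [Algebra.smul_def]
      ring
    change D (D (T 1 * g)) = (t - ↑t⁻¹ : R) • D (T 1 * g) + T 1 * g ↔
      D (D g) = (t - ↑t⁻¹ : R) • D g + g
    rw [← sub_eq_zero, h_mul, (isUnit_T 1).mul_right_eq_zero, sub_eq_zero]

theorem apply_T_one_mul_apply (hD : IsDemazureLusztig t D) (f : R[T;T⁻¹]) :
    D (T 1 * D f) = T (-1) * f := by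
  rw [hD.apply_T_one_mul, hD.apply_apply, add_sub_cancel_left]

theorem laurentAeval_apply (hD : IsDemazureLusztig t D) (f : R[T;T⁻¹]) :
    laurentAeval t⁻¹ (D f) = (t : R) * laurentAeval t⁻¹ f := by
  suffices h : (laurentAeval t⁻¹).toLinearMap ∘ₗ D = (t : R) • (laurentAeval t⁻¹).toLinearMap from
    LinearMap.congr_fun h f
  refine laurentLinearMap_ext_of_T_one_mul ?_ fun g => ?_
  · simp [hD.apply_one]
  · change laurentAeval t⁻¹ (D (T 1 * g)) = (t : R) * laurentAeval t⁻¹ (T 1 * g) ↔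
      laurentAeval t⁻¹ (D g) = (t : R) * laurentAeval t⁻¹ g
    have h_mul : laurentAeval t⁻¹ (D (T 1 * g)) - (t : R) * laurentAeval t⁻¹ (T 1 * g) =
        t * (laurentAeval t⁻¹ (D g) - t * laurentAeval t⁻¹ g) := by
      rw [hD.apply_T_one_mul]
      simp only [map_mul, map_sub, map_smul, laurentAeval_T, smul_eq_mul, zpow_one, zpow_neg,
        inv_inv]
      ring
    rw [← sub_eq_zero, h_mul, t.mul_right_eq_zero, sub_eq_zero]

theorem negSubst_apply (hD : IsDemazureLusztig t D) (f : R[T;T⁻¹]) :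
    negSubst (D f) = D (negSubst f) := by
  suffices h : negSubst.toLinearMap ∘ₗ D = D ∘ₗ negSubst.toLinearMap from
    LinearMap.congr_fun h f
  refine laurentLinearMap_ext_of_T_one_mul ?_ fun g => ?_
  · simp [hD.apply_one]
  · change negSubst (D (T 1 * g)) = D (negSubst (T 1 * g)) ↔ negSubst (D g) = D (negSubst g)
    rw [map_mul negSubst, negSubst_T_one, neg_mul, map_neg, hD.apply_T_one_mul, hD.apply_T_one_mul,
      map_mul negSubst, negSubst_T_neg_one, neg_mul, neg_inj, map_sub, map_smul,
      (isUnit_T (-1)).mul_right_inj, sub_left_inj]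

/-- The operator `Y = π ∘ D`, as a unit of the endomorphism ring because the pairing needs `Y⁻¹`. -/
def cherednikUnit (hD : IsDemazureLusztig t D) (q : Rˣ) : (Module.End R R[T;T⁻¹])ˣ where
  val := (scaledInvert q).toLinearMap * D
  inv := (D - (t - ↑t⁻¹ : R) • 1) * (scaledInvert q).toLinearMap
  val_inv := LinearMap.ext fun f => by simp [hD.apply_apply, scaledInvert_scaledInvert]
  inv_val := LinearMap.ext fun f => by simp [hD.apply_apply, scaledInvert_scaledInvert]

theorem cherednikUnit_inv_apply (hD : IsDemazureLusztig t D) (q : Rˣ) (f : R[T;T⁻¹]) :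
    (hD.cherednikUnit q)⁻¹.1 f = D (scaledInvert q f) - (t - ↑t⁻¹ : R) • scaledInvert q f := rfl

theorem apply_cherednikUnit_inv (hD : IsDemazureLusztig t D) (q : Rˣ) (f : R[T;T⁻¹]) :
    D ((hD.cherednikUnit q)⁻¹.1 f) = scaledInvert q f := by
  rw [cherednikUnit_inv_apply, map_sub, map_smul, hD.apply_apply, add_sub_cancel_left]

theorem cherednikUnit_inv_one (hD : IsDemazureLusztig t D) (q : Rˣ) :
    (hD.cherednikUnit q)⁻¹.1 1 = (↑t⁻¹ : R) • 1 := by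
  rw [cherednikUnit_inv_apply, map_one, hD.apply_one, ← sub_smul, sub_sub_cancel]

theorem cherednikUnit_inv_T_one_mul (hD : IsDemazureLusztig t D) (q : Rˣ) (f : R[T;T⁻¹]) :
    (hD.cherednikUnit q)⁻¹.1 (T 1 * f) = (q : R) • (T 1 * D (scaledInvert q f)) := by
  rw [cherednikUnit_inv_apply, map_mul, scaledInvert_T, zpow_one, smul_mul_assoc, map_smul,
    hD.apply_T_neg_one_mul, smul_comm _ (q : R), ← smul_sub, add_sub_cancel_right]

end IsDemazureLusztig

end DemazureLusztig

section DualityPairing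

open LaurentPolynomial

variable {R : Type*} [CommRing R]

/-- The pairing `{f, g} = ev(f(y⁻¹) g)`, where `ev` is the evaluation at `X = t⁻¹`. It is the
duality pairing when `y` is the operator `Y` and `t` stands for `t^½`. -/
def dualityPairing (t : Rˣ) (y : (Module.End R R[T;T⁻¹])ˣ) :
    R[T;T⁻¹] →ₗ[R] R[T;T⁻¹] →ₗ[R] R :=
  LinearMap.compRight R (laurentAeval t⁻¹).toLinearMap ∘ₗ (laurentAeval y⁻¹).toLinearMap

theorem dualityPairing_T (t : Rˣ) (y : (Module.End R R[T;T⁻¹])ˣ) (m : ℤ) (g : R[T;T⁻¹]) :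
    dualityPairing t y (T m) g = laurentAeval t⁻¹ ((y ^ (-m)).1 g) := by
  simp [dualityPairing]

theorem dualityPairing_one (t : Rˣ) (y : (Module.End R R[T;T⁻¹])ˣ) (g : R[T;T⁻¹]) :
    dualityPairing t y 1 g = laurentAeval t⁻¹ g := by
  simp [dualityPairing]

theorem dualityPairing_T_one_mul (t : Rˣ) (y : (Module.End R R[T;T⁻¹])ˣ) (f g : R[T;T⁻¹]) :
    dualityPairing t y (T 1 * f) g = dualityPairing t y f (y⁻¹.1 g) := by
  rw [mul_comm]
  simp [dualityPairing]

theorem map_mem_ker_of_isAdjointPair {R M P : Type*} [CommSemiring R] [AddCommMonoid M]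
    [AddCommMonoid P] [Module R M] [Module R P] {B : M →ₗ[R] M →ₗ[R] P} {f g : M → M}
    (h : LinearMap.IsAdjointPair B B f g) {x : M} (hx : x ∈ B.ker) : f x ∈ B.ker := by
  rw [LinearMap.mem_ker]
  ext y
  rw [h, LinearMap.mem_ker.mp hx, LinearMap.zero_apply, LinearMap.zero_apply]

theorem isAdjointPair_of_T_one_mul {N P : Type*} [AddCommMonoid N] [AddCommMonoid P] [Module R N]
    [Module R P] {B : R[T;T⁻¹] →ₗ[R] N →ₗ[R] P} {φ : Module.End R R[T;T⁻¹]} {ψ : Module.End R N}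
    (h_one : ∀ g, B (φ 1) g = B 1 (ψ g))
    (h_mul : ∀ f, (∀ g, B (φ (T 1 * f)) g = B (T 1 * f) (ψ g)) ↔ ∀ g, B (φ f) g = B f (ψ g)) :
    ∀ f g, B (φ f) g = B f (ψ g) := by
  have h : B ∘ₗ φ = B.compl₂ ψ := laurentLinearMap_ext_of_T_one_mul (LinearMap.ext h_one)
    fun f => by
      simpa only [LinearMap.ext_iff, LinearMap.comp_apply, LinearMap.compl₂_apply] using h_mul f
  exact fun f => LinearMap.congr_fun (LinearMap.congr_fun h f)

namespace IsDemazureLusztig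

variable [IsDomain R] {t : Rˣ} {D : Module.End R R[T;T⁻¹]}

theorem isAdjointPair_self (hD : IsDemazureLusztig t D) (q : Rˣ) :
    LinearMap.IsAdjointPair (dualityPairing t (hD.cherednikUnit q))
      (dualityPairing t (hD.cherednikUnit q)) D D := by
  set y := hD.cherednikUnit q
  refine isAdjointPair_of_T_one_mul (fun g => ?_) fun f => ?_
  · rw [hD.apply_one, map_smul, LinearMap.smul_apply, dualityPairing_one, dualityPairing_one,
      hD.laurentAeval_apply, smul_eq_mul]
  · have h_T_neg_one_mul (h g : R[T;T⁻¹]) :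
        dualityPairing t y (T (-1) * h) (y⁻¹.1 g) = dualityPairing t y h g := by
      rw [← dualityPairing_T_one_mul, T_one_mul_T_neg_one_mul]
    have h_inv_D_inv (g : R[T;T⁻¹]) : y⁻¹.1 (D (y⁻¹.1 g)) = D g - (t - ↑t⁻¹ : R) • g := by
      rw [hD.apply_cherednikUnit_inv, hD.cherednikUnit_inv_apply, scaledInvert_scaledInvert]
    have h_step (g : R[T;T⁻¹]) :
        dualityPairing t y (D (T 1 * f)) (y⁻¹.1 g) = dualityPairing t y (T 1 * f) (D (y⁻¹.1 g)) ↔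
          dualityPairing t y (D f) g = dualityPairing t y f (D g) := by
      rw [hD.apply_T_one_mul, h_T_neg_one_mul, dualityPairing_T_one_mul, h_inv_D_inv, map_sub,
        map_sub, map_smul, map_smul, LinearMap.sub_apply, LinearMap.smul_apply, sub_left_inj]
    have h_surj : Function.Surjective y⁻¹.1 := ((Module.End.isUnit_iff _).mp y⁻¹.isUnit).surjective
    rw [h_surj.forall]
    exact forall_congr' h_step

theorem isAdjointPair_cherednikUnit_inv (hD : IsDemazureLusztig t D) (q : Rˣ) :
    LinearMap.IsAdjointPair (dualityPairing t (hD.cherednikUnit q))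
      (dualityPairing t (hD.cherednikUnit q)) (hD.cherednikUnit q)⁻¹.1
      (LinearMap.mulLeft R (T 1)) := by
  set y := hD.cherednikUnit q
  refine isAdjointPair_of_T_one_mul (fun g => ?_) fun f => ?_
  · rw [hD.cherednikUnit_inv_one, map_smul, LinearMap.smul_apply, dualityPairing_one,
      dualityPairing_one, LinearMap.mulLeft_apply, map_mul, laurentAeval_T, zpow_one, smul_eq_mul]
  · have h_left (g : R[T;T⁻¹]) : dualityPairing t y (y⁻¹.1 (T 1 * f)) g =
        q * dualityPairing t y (y⁻¹.1 f) (D (scaledInvert q g)) := by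
      rw [hD.cherednikUnit_inv_T_one_mul, map_smul, LinearMap.smul_apply, dualityPairing_T_one_mul,
        hD.isAdjointPair_self q, hD.apply_cherednikUnit_inv, ← hD.apply_cherednikUnit_inv q f,
        hD.isAdjointPair_self q, smul_eq_mul]
    have h_right (g : R[T;T⁻¹]) : dualityPairing t y (T 1 * f) (T 1 * g) =
        q * dualityPairing t y f (T 1 * D (scaledInvert q g)) := by
      rw [dualityPairing_T_one_mul, hD.cherednikUnit_inv_T_one_mul, map_smul, smul_eq_mul]
    have h_surj : Function.Surjective fun g => D (scaledInvert q g) := fun g =>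
      ⟨scaledInvert q (D g - (t - ↑t⁻¹ : R) • g), by
        simp [scaledInvert_scaledInvert, hD.apply_apply]⟩
    simp only [LinearMap.mulLeft_apply, h_left, h_right, q.mul_right_inj]
    exact (h_surj.forall (p := fun g => dualityPairing t y (y⁻¹.1 f) g =
      dualityPairing t y f (T 1 * g))).symm

theorem isAdjointPair_scaledInvert (hD : IsDemazureLusztig t D) (q : Rˣ) :
    LinearMap.IsAdjointPair (dualityPairing t (hD.cherednikUnit q))
      (dualityPairing t (hD.cherednikUnit q)) (scaledInvert q) (LinearMap.mulLeft R (T 1) ∘ₗ D) :=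
  fun f g => by
    rw [← hD.apply_cherednikUnit_inv, hD.isAdjointPair_self q,
      hD.isAdjointPair_cherednikUnit_inv q, LinearMap.comp_apply]

theorem dualityPairing_apply_one (hD : IsDemazureLusztig t D) (q : Rˣ) (f : R[T;T⁻¹]) :
    dualityPairing t (hD.cherednikUnit q) f 1 = laurentAeval t⁻¹ f := by
  suffices h : (dualityPairing t (hD.cherednikUnit q)).flip 1 = (laurentAeval t⁻¹).toLinearMap from
    LinearMap.congr_fun h f
  refine laurentLinearMap_ext_of_T_one_mul ?_ fun g => ?_
  · rw [LinearMap.flip_apply, dualityPairing_one, AlgHom.toLinearMap_apply]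
  · have h_pair : dualityPairing t (hD.cherednikUnit q) (T 1 * g) 1 =
        ↑t⁻¹ * dualityPairing t (hD.cherednikUnit q) g 1 := by
      rw [dualityPairing_T_one_mul, hD.cherednikUnit_inv_one, map_smul, smul_eq_mul]
    have h_eval : laurentAeval t⁻¹ (T 1 * g) = ↑t⁻¹ * laurentAeval t⁻¹ g := by
      rw [map_mul, laurentAeval_T, zpow_one]
    simp only [LinearMap.flip_apply, AlgHom.toLinearMap_apply, h_pair, h_eval, Units.mul_right_inj]

theorem le_ker_dualityPairing (hD : IsDemazureLusztig t D) (q : Rˣ) {M : Submodule R R[T;T⁻¹]}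
    (hM_D : ∀ f ∈ M, D f ∈ M) (hM_π : ∀ f ∈ M, scaledInvert q f ∈ M)
    (hM_eval : ∀ f ∈ M, laurentAeval t⁻¹ f = 0) :
    M ≤ (dualityPairing t (hD.cherednikUnit q)).ker := by
  set y := hD.cherednikUnit q
  have hM_Y : ∀ f ∈ M, y.1 f ∈ M := fun f hf => hM_π _ (hM_D f hf)
  have hM_Y_inv : ∀ f ∈ M, y⁻¹.1 f ∈ M := fun f hf =>
    M.sub_mem (hM_D _ (hM_π f hf)) (M.smul_mem _ (hM_π f hf))
  have h_inv_apply (f : R[T;T⁻¹]) : y⁻¹.1 (y.1 f) = f := LinearMap.congr_fun y.inv_mul f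
  have h_adj (f g : R[T;T⁻¹]) :
      dualityPairing t y f (T 1 * g) = dualityPairing t y (y⁻¹.1 f) g :=
    (hD.isAdjointPair_cherednikUnit_inv q f g).symm
  suffices h : ((dualityPairing t y).domRestrict M).flip = 0 from
    fun f hf => LinearMap.ext fun g => LinearMap.congr_fun (LinearMap.congr_fun h g) ⟨f, hf⟩
  refine laurentLinearMap_ext_of_T_one_mul (LinearMap.ext fun f => ?_) fun g => ?_
  · exact (hD.dualityPairing_apply_one q f).trans (hM_eval f f.2)
  · simp only [LinearMap.ext_iff, Subtype.forall, LinearMap.flip_apply, LinearMap.domRestrict_apply,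
      LinearMap.zero_apply, h_adj]
    refine ⟨fun h f hf => ?_, fun h f hf => h _ (hM_Y_inv f hf)⟩
    rw [← h_inv_apply f]
    exact h _ (hM_Y f hf)

theorem le_ker_dualityPairing_of_neg (hD : IsDemazureLusztig t D) (q : Rˣ)
    {M : Submodule R R[T;T⁻¹]} (hM_ker : (dualityPairing t (hD.cherednikUnit q)).ker ≤ M)
    (hM_D : ∀ f ∈ M, D f ∈ M) (hM_π : ∀ f ∈ M, scaledInvert q f ∈ M)
    (hM_eval : ∀ f ∈ M, laurentAeval (-t⁻¹) f = 0) :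
    M ≤ (dualityPairing t (hD.cherednikUnit q)).ker := by
  have h_mem (f : R[T;T⁻¹]) : f ∈ M.comap negSubst.toLinearMap ↔ negSubst f ∈ M :=
    Submodule.mem_comap
  have h_comap : M.comap negSubst.toLinearMap ≤ (dualityPairing t (hD.cherednikUnit q)).ker := by
    refine hD.le_ker_dualityPairing q (fun f hf => ?_) (fun f hf => ?_) fun f hf => ?_
    all_goals rw [h_mem] at hf
    · rw [h_mem, hD.negSubst_apply]
      exact hM_D _ hf
    · rw [h_mem, negSubst_scaledInvert]
      exact hM_π _ hf
    · rw [← negSubst_negSubst f, laurentAeval_negSubst]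
      exact hM_eval _ hf
  have h_neg (f : R[T;T⁻¹]) (hf : f ∈ M) : negSubst f ∈ M :=
    hM_ker (h_comap ((h_mem _).mpr ((negSubst_negSubst f).symm ▸ hf)))
  exact fun f hf => h_comap ((h_mem f).mpr (h_neg f hf))

end IsDemazureLusztig

end DualityPairing

section InvariantSubmodules

open LaurentPolynomial

variable {K : Type*} [Field K] {t : Kˣ} {D : Module.End K K[T;T⁻¹]}

theorem smul_inv_mem_laurentZeroLocus {L : Type*} [Field L] [Algebra K L]
    {M : Submodule K K[T;T⁻¹]} {q : Kˣ} (hM_π : ∀ f ∈ M, scaledInvert q f ∈ M) {v : Lˣ}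
    (hv : v ∈ laurentZeroLocus L (M : Set K[T;T⁻¹])) :
    q • v⁻¹ ∈ laurentZeroLocus L (M : Set K[T;T⁻¹]) := fun f hf => by
  rw [← laurentAeval_scaledInvert]
  exact hv _ (hM_π f hf)

namespace IsDemazureLusztig

theorem inv_mem_laurentZeroLocus (hD : IsDemazureLusztig t D) {L : Type*} [Field L] [Algebra K L]
    {M : Submodule K K[T;T⁻¹]} (hM_D : ∀ f ∈ M, D f ∈ M) {v : Lˣ}
    (hv : v ∈ laurentZeroLocus L (M : Set K[T;T⁻¹])) (hv_ne : v ≠ t⁻¹ • 1)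
    (hv_ne_neg : v ≠ -t⁻¹ • 1) : v⁻¹ ∈ laurentZeroLocus L (M : Set K[T;T⁻¹]) := fun f hf => by
  have h_eval := congrArg (laurentAeval v) (hD f)
  have h_v : (v : L) ≠ algebraMap K L ↑t⁻¹ := fun h =>
    hv_ne (Units.ext (by simpa [Units.smul_def, Algebra.smul_def] using h))
  have h_v_neg : (v : L) ≠ -algebraMap K L ↑t⁻¹ := fun h =>
    hv_ne_neg (Units.ext (by simpa [Units.smul_def, Algebra.smul_def] using h))
  have h_t : algebraMap K L t * algebraMap K L ↑t⁻¹ = 1 := by rw [← map_mul, t.mul_inv, map_one]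
  simp only [map_mul, map_add, map_sub, map_one, laurentAeval_T, laurentAeval_invert,
    map_smul, hv _ hf, hv _ (hM_D f hf), mul_zero, sub_zero] at h_eval
  have h_mul : algebraMap K L t * (v - algebraMap K L ↑t⁻¹) * (v + algebraMap K L ↑t⁻¹) *
      laurentAeval v⁻¹ f = 0 := by
    simp only [Algebra.smul_def, map_sub, zpow_ofNat, Units.val_pow_eq_pow_val] at h_eval
    linear_combination -h_eval - algebraMap K L ↑t⁻¹ * laurentAeval v⁻¹ f * h_t
  have h_add : v + algebraMap K L ↑t⁻¹ ≠ 0 := fun h => h_v_neg (eq_neg_of_add_eq_zero_left h)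
  exact (mul_eq_zero.mp h_mul).resolve_left (mul_ne_zero
    (mul_ne_zero (left_ne_zero_of_mul_eq_one h_t) (sub_ne_zero.mpr h_v)) h_add)

theorem submodule_le_ker_or_eq_top (hD : IsDemazureLusztig t D) {q : Kˣ} (hq : ¬IsOfFinOrder q)
    {M : Submodule K K[T;T⁻¹]} (hM_ker : (dualityPairing t (hD.cherednikUnit q)).ker ≤ M)
    (hM_D : ∀ f ∈ M, D f ∈ M) (hM_π : ∀ f ∈ M, scaledInvert q f ∈ M)
    (hM_X : ∀ f ∈ M, T 1 * f ∈ M) :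
    M ≤ (dualityPairing t (hD.cherednikUnit q)).ker ∨ M = ⊤ := by
  let L := AlgebraicClosure K
  have hM_X_inv (f : K[T;T⁻¹]) (hf : f ∈ M) : T (-1) * f ∈ M := by
    rw [← hD.apply_T_one_mul_apply]
    exact hM_D _ (hM_X _ (hM_D f hf))
  obtain ⟨I, rfl⟩ := exists_ideal_restrictScalars_eq hM_X hM_X_inv
  rcases eq_or_ne I ⊥ with rfl | hI_bot
  · exact Or.inl (by simp)
  by_cases h_pos : t⁻¹ • (1 : Lˣ) ∈ laurentZeroLocus L (I : Set K[T;T⁻¹])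
  · refine Or.inl (hD.le_ker_dualityPairing q hM_D hM_π fun f hf => ?_)
    simpa [laurentAeval_smul_one] using h_pos f hf
  by_cases h_neg : -t⁻¹ • (1 : Lˣ) ∈ laurentZeroLocus L (I : Set K[T;T⁻¹])
  · refine Or.inl (hD.le_ker_dualityPairing_of_neg q hM_ker hM_D hM_π fun f hf => ?_)
    simpa [laurentAeval_smul_one] using h_neg f hf
  refine Or.inr ?_
  by_contra hI_top
  obtain ⟨v, hv⟩ := nonempty_laurentZeroLocus L fun h : I = ⊤ => hI_top (by simp [h])
  refine hq (isOfFinOrder_of_smul_mem (finite_laurentZeroLocus L hI_bot) hv ?_ fun u hu => ?_)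
  · intro a b h
    simpa [Units.ext_iff, Units.smul_def, Algebra.smul_def] using h
  · have hu_inv := hD.inv_mem_laurentZeroLocus hM_D hu (fun h => h_pos (h ▸ hu))
      fun h => h_neg (h ▸ hu)
    simpa using smul_inv_mem_laurentZeroLocus hM_π hu_inv

end IsDemazureLusztig

end InvariantSubmodules

section DualityQuotient

open LaurentPolynomial

theorem eq_coe_zpow_of_map_add {M : Type*} [Monoid M] {φ : ℤ → M} (h_zero : φ 0 = 1)
    (h_add : ∀ a b, φ (a + b) = φ a * φ b) {u : Mˣ} (h_one : φ 1 = u) (m : ℤ) :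
    φ m = ↑(u ^ m) := by
  let Φ : Multiplicative ℤ →* M :=
    { toFun := fun m => φ m.toAdd
      map_one' := h_zero
      map_mul' := fun a b => h_add a.toAdd b.toAdd }
  have hΦ : Φ = (Units.coeHom M).comp (zpowersHom Mˣ u) :=
    MonoidHom.ext_mint (by simpa [Φ] using h_one)
  exact DFunLike.congr_fun hΦ (.ofAdd m)

theorem eq_bot_or_eq_top_of_comap_mkQ {R M : Type*} [Ring R] [AddCommGroup M] [Module R M]
    {N : Submodule R M} {W : Submodule R (M ⧸ N)}
    (h : W.comap N.mkQ ≤ N ∨ W.comap N.mkQ = ⊤) : W = ⊥ ∨ W = ⊤ := by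
  rw [← Submodule.map_comap_eq_of_surjective N.mkQ_surjective W]
  refine h.imp (fun h_le => ?_) fun h_top => ?_
  · rwa [← LinearMap.le_ker_iff_map, N.ker_mkQ]
  · rw [h_top, Submodule.map_top, N.range_mkQ]

theorem stmt0_general {K : Type*} [Field K]
    (q2 t2 : K) (hq2 : q2 ≠ 0) (ht2 : t2 ≠ 0)
    (S Top Pi Y : K[T;T⁻¹] →ₗ[K] K[T;T⁻¹])
    (hS : ∀ m : ℤ, S (T m) = T (-m))
    (hPi : ∀ m : ℤ, Pi (T m) = q2 ^ m • T (-m))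
    (hT : ∀ f : K[T;T⁻¹], (T 2 - 1) * Top f
        = t2 • ((T 2 - 1) * S f) + (t2 - t2⁻¹) • (S f - f))
    (hY : Y = Pi ∘ₗ Top)
    (ev : K[T;T⁻¹] →ₗ[K] K) (hev : ∀ m : ℤ, ev (T m) = t2 ^ (-m))
    (Yz : ℤ → K[T;T⁻¹] →ₗ[K] K[T;T⁻¹])
    (hYz0 : Yz 0 = LinearMap.id) (hYz1 : Yz 1 = Y)
    (hYzadd : ∀ a b : ℤ, Yz (a + b) = Yz a ∘ₗ Yz b)
    (pair : K[T;T⁻¹] →ₗ[K] K[T;T⁻¹] →ₗ[K] K)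
    (hpair : ∀ (m : ℤ) (g : K[T;T⁻¹]), pair (T m) g = ev (Yz (-m) g))
    (hqnr : ∀ n : ℕ, 0 < n → (q2 ^ 2) ^ n ≠ 1) :
    (∀ f ∈ pair.ker, Top f ∈ pair.ker ∧ Pi f ∈ pair.ker ∧ T 1 * f ∈ pair.ker) ∧
    ∃ (hT' : pair.ker ≤ pair.ker.comap Top)
      (hP' : pair.ker ≤ pair.ker.comap Pi)
      (hX' : pair.ker ≤ pair.ker.comap (LinearMap.mulLeft K (T 1))),
      ∀ W : Submodule K (K[T;T⁻¹] ⧸ pair.ker),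
        (∀ v ∈ W, pair.ker.mapQ pair.ker Top hT' v ∈ W ∧
            pair.ker.mapQ pair.ker Pi hP' v ∈ W ∧
            pair.ker.mapQ pair.ker (LinearMap.mulLeft K (T 1)) hX' v ∈ W) →
        W = ⊥ ∨ W = ⊤ := by
  lift q2 to Kˣ using hq2.isUnit with q
  lift t2 to Kˣ using ht2.isUnit with t
  have hS_eq : S = invert.toLinearMap := laurentLinearMap_ext fun m => by simp [hS]
  have hPi_eq : Pi = (scaledInvert q).toLinearMap :=
    laurentLinearMap_ext fun m => by simp [hPi, scaledInvert_T]
  have hev_eq : ev = (laurentAeval t⁻¹).toLinearMap :=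
    laurentLinearMap_ext fun m => by simp [hev]
  have hD : IsDemazureLusztig t Top := fun f => by simp [hT, hS_eq]
  have hYz (m : ℤ) : Yz m = (hD.cherednikUnit q ^ m).1 :=
    eq_coe_zpow_of_map_add hYz0 hYzadd (by rw [hYz1, hY, hPi_eq]; rfl) m
  obtain rfl : pair = dualityPairing t (hD.cherednikUnit q) :=
    laurentLinearMap_ext fun m => LinearMap.ext fun g => by
      rw [hpair, hev_eq, hYz, dualityPairing_T, AlgHom.toLinearMap_apply]
  subst hPi_eq
  have hq : ¬IsOfFinOrder q := fun h => by
    obtain ⟨n, hn, h_pow⟩ := isOfFinOrder_iff_pow_eq_one.mp h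
    exact hqnr n hn (by rw [pow_right_comm, ← Units.val_pow_eq_pow_val, h_pow]; simp)
  have h_ker (f : K[T;T⁻¹]) (hf : f ∈ (dualityPairing t (hD.cherednikUnit q)).ker) :=
    And.intro (map_mem_ker_of_isAdjointPair (hD.isAdjointPair_self q) hf)
      (And.intro (map_mem_ker_of_isAdjointPair (hD.isAdjointPair_scaledInvert q) hf)
        (map_mem_ker_of_isAdjointPair (dualityPairing_T_one_mul t (hD.cherednikUnit q)) hf))
  refine ⟨h_ker, fun f hf => (h_ker f hf).1, fun f hf => (h_ker f hf).2.1,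
    fun f hf => (h_ker f hf).2.2, fun W hW => eq_bot_or_eq_top_of_comap_mkQ ?_⟩
  exact hD.submodule_le_ker_or_eq_top hq (Submodule.le_comap_mkQ _ W)
    (fun f hf => (hW _ hf).1) (fun f hf => (hW _ hf).2.1) fun f hf => (hW _ hf).2.2

end DualityQuotient

/-- if `q` is not a root of unity, then `Rad` is an `A`-submodule
of `V` (invariant under `T`, `π` and multiplication by `X`), and if the
quotient `V' = V/Rad` is finite dimensional over `ℂ` then it is a simple
`A`-module: the only subspaces of `V'` invariant under the operators induced
by `T`, `π` and multiplication by `X` are `{0}` and `V'`. -/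
theorem stmt0
    (q2 t2 : ℂ) (hq2 : q2 ≠ 0) (ht2 : t2 ≠ 0)
    (S Top Pi Y : V →ₗ[ℂ] V)
    (hS : ∀ m : ℤ, S (Xm m) = Xm (-m))
    (hPi : ∀ m : ℤ, Pi (Xm m) = q2 ^ m • Xm (-m))
    (hT : ∀ f : V, (Xm 2 - 1) * Top f
        = t2 • ((Xm 2 - 1) * S f) + (t2 - t2⁻¹) • (S f - f))
    (hY : Y = Pi ∘ₗ Top)
    (ev : V →ₗ[ℂ] ℂ) (hev : ∀ m : ℤ, ev (Xm m) = t2 ^ (-m))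
    (Yz : ℤ → V →ₗ[ℂ] V)
    (hYz0 : Yz 0 = LinearMap.id) (hYz1 : Yz 1 = Y)
    (hYzadd : ∀ a b : ℤ, Yz (a + b) = Yz a ∘ₗ Yz b)
    (pair : V →ₗ[ℂ] V →ₗ[ℂ] ℂ)
    (hpair : ∀ (m : ℤ) (g : V), pair (Xm m) g = ev (Yz (-m) g))
    (hqnr : ∀ n : ℕ, 0 < n → (q2 ^ 2) ^ n ≠ 1) :
    (∀ f ∈ Rad pair, Top f ∈ Rad pair ∧ Pi f ∈ Rad pair ∧ Xm 1 * f ∈ Rad pair) ∧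
    ∃ (hT' : Rad pair ≤ (Rad pair).comap Top)
      (hP' : Rad pair ≤ (Rad pair).comap Pi)
      (hX' : Rad pair ≤ (Rad pair).comap (LinearMap.mulLeft ℂ (Xm 1))),
      FiniteDimensional ℂ (V ⧸ Rad pair) →
      ∀ W : Submodule ℂ (V ⧸ Rad pair),
        (∀ v ∈ W, (Rad pair).mapQ (Rad pair) Top hT' v ∈ W ∧
            (Rad pair).mapQ (Rad pair) Pi hP' v ∈ W ∧
            (Rad pair).mapQ (Rad pair) (LinearMap.mulLeft ℂ (Xm 1)) hX' v ∈ W) →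
        W = ⊥ ∨ W = ⊤ := by
  obtain ⟨hRad, hT', hP', hX', h_simple⟩ := stmt0_general q2 t2 hq2 ht2 S Top Pi Y hS hPi hT hY
    ev hev Yz hYz0 hYz1 hYzadd pair hpair hqnr
  exact ⟨hRad, hT', hP', hX', fun _ => h_simple⟩
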